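/- For an initial element i and any valid chain element x, one has x ⊑ i if and only if x = i. -/

import Mathlib

def SB.Valid {α β : Type*} (P : Set α) (Q : Set β) : α ⊕ β → Prop
  | Sum.inl p => p ∈ P
  | Sum.inr q => q ∈ Q

def SB.step {α β : Type*} (f : α → β) (g : β → α) : α ⊕ β → α ⊕ β
  | Sum.inl p => Sum.inr (f p)
  | Sum.inr q => Sum.inl (g q)

def SB.ChainLE {α β : Type*} (f : α → β) (g : β → α) : α ⊕ β → α ⊕ β → Prop :=
  Relation.ReflTransGen (fun x y => y = SB.step f g x)

def SB.Initial {α β : Type*} (P : Set α) (Q : Set β) (f : α → β) (g : β → α) :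
    α ⊕ β → Prop
  | Sum.inl p => p ∉ g '' Q
  | Sum.inr q => q ∉ f '' P

namespace SB

variable {α β : Type*} {P : Set α} {Q : Set β} {f : α → β} {g : β → α} {x y : α ⊕ β}

theorem Valid.valid_step (hx : Valid P Q x) (hf : Set.MapsTo f P Q) (hg : Set.MapsTo g Q P) :
    Valid P Q (step f g x) := by
  cases x with
  | inl p => exact hf hx
  | inr q => exact hg hx

theorem Valid.of_chainLE (hx : Valid P Q x) (hf : Set.MapsTo f P Q) (hg : Set.MapsTo g Q P)
    (hxy : ChainLE f g x y) : Valid P Q y := by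
  induction hxy with
  | refl => exact hx
  | tail _ hstep ih => exact hstep ▸ ih.valid_step hf hg

theorem Valid.not_initial_step (hx : Valid P Q x) : ¬ Initial P Q f g (step f g x) := by
  cases x with
  | inl p => exact not_not_intro (Set.mem_image_of_mem f hx)
  | inr q => exact not_not_intro (Set.mem_image_of_mem g hx)

end SB

theorem chainLE_initial_iff_eq_general {α β : Type*} {P : Set α} {Q : Set β}
    {f : α → β} {g : β → α} (hf : Set.MapsTo f P Q) (hg : Set.MapsTo g Q P)
    {i : α ⊕ β} (hi : SB.Initial P Q f g i) {x : α ⊕ β} (hx : SB.Valid P Q x) :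
    SB.ChainLE f g x i ↔ x = i := by
  refine ⟨fun hxi => ?_, fun hxi => hxi ▸ Relation.ReflTransGen.refl⟩
  obtain hix | ⟨y, hxy, rfl⟩ := hxi.cases_tail
  · exact hix.symm
  · have hy : SB.Valid P Q y := hx.of_chainLE hf hg hxy
    exact absurd hi hy.not_initial_step

theorem chainLE_initial_iff_eq {α β : Type*} (P : Set α) (Q : Set β)
    (f : α → β) (g : β → α)
    (hfm : Set.MapsTo f P Q) (hfi : Set.InjOn f P)
    (hgm : Set.MapsTo g Q P) (hgi : Set.InjOn g Q)
    (i : α ⊕ β) (hiv : SB.Valid P Q i) (hii : SB.Initial P Q f g i)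
    (x : α ⊕ β) (hx : SB.Valid P Q x) :
    SB.ChainLE f g x i ↔ x = i :=
  chainLE_initial_iff_eq_general hfm hgm hii hx
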